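/- Let Ω ⊂ ℂ be a bounded, open, simply connected set whose frontier Γ = ∂Ω equals the image of an injective, twice continuously differentiable map γ : S¹ → ℂ, and let ξ, η : closure(Ω) → ℝ be continuous on closure(Ω), harmonic on Ω, with ξ(γ(e^{iθ})) = cos θ and η(γ(e^{iθ})) = sin θ for all θ. Then the Jacobian determinant of the map g = (ξ, η) : Ω → ℝ², namely ∂ξ/∂x · ∂η/∂y − ∂η/∂x · ∂ξ/∂y, is nonzero at every point of Ω; consequently g is a local diffeomorphism at every point of Ω. -/

import Mathlib

open Complex Metric Set

/-- A real-valued function on `ℂ ≅ ℝ²` is harmonic on an open set `U` if it is twice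
continuously differentiable on `U` and its Laplacian vanishes identically on `U`. -/
def HarmonicOnSet (f : ℂ → ℝ) (U : Set ℂ) : Prop :=
  ContDiffOn ℝ 2 f U ∧
    ∀ p ∈ U,
      fderiv ℝ (fun z => fderiv ℝ f z 1) p 1 +
        fderiv ℝ (fun z => fderiv ℝ f z Complex.I) p Complex.I = 0

/-!
The map `g` is the harmonic extension of a homeomorphism from `frontier Ω` onto the unit circle.
If its Jacobian vanishes at `p`, then some `u = ⟪v, g⟫` with `v ≠ 0` is critical at `p`. Being
harmonic, `u - u p` looks near `p` like the real part of a power `n ≥ 2` of a local coordinate, so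
at least four rays at `p` alternate between `{u > u p}` and `{u < u p}`. By the maximum principle
every component of these two sets reaches the frontier, where each of them cuts out a single arc;
hence both are connected in `closure Ω`. But in the plane two disjoint connected sets cannot
alternate along four rays at a point: if `a` and `b` are endpoints of two rays lying in one of
them, then `log ((z - a) / (z - b))` has a single-valued branch along the other, while the limits
of its imaginary part at the point along the two remaining rays would differ by `2π`.
-/

section

open Filter Topology InnerProductSpace ComplexConjugate ComplexOrder ContDiff

theorem frontier_connectedComponentIn_subset {X : Type*} [TopologicalSpace X]
    [LocallyConnectedSpace X] {U : Set X} (hU : IsOpen U) (x : X) :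
    frontier (connectedComponentIn U x) ⊆ frontier U := by
  rintro q ⟨hqC, hqi⟩
  rw [hU.connectedComponentIn.interior_eq] at hqi
  refine ⟨closure_mono (connectedComponentIn_subset U x) hqC, fun hq => hqi ?_⟩
  obtain ⟨y, hy⟩ := closure_nonempty_iff.1 ⟨q, hqC⟩
  have hins : IsPreconnected (insert q (connectedComponentIn U x)) :=
    isPreconnected_connectedComponentIn.subset_closure (subset_insert _ _)
      (insert_subset hqC subset_closure)
  have hsub := hins.subset_connectedComponentIn (mem_insert_of_mem q hy)
    (insert_subset (interior_subset hq) (connectedComponentIn_subset U x))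
  rw [connectedComponentIn_eq hy]
  exact hsub (mem_insert q _)

theorem not_countable_frontier {E : Type*} [NormedAddCommGroup E] [NormedSpace ℝ E]
    (hE : 1 < Module.rank ℝ E) {V : Set E} (hVo : IsOpen V) (hVb : Bornology.IsBounded V)
    (hV : V.Nonempty) : ¬ (frontier V).Countable := by
  have : Nontrivial E := by
    rw [← rank_pos_iff_nontrivial (R := ℝ)]
    exact zero_lt_one.trans hE
  intro hcount
  have hconn := (hcount.isConnected_compl_of_one_lt_rank hE).isPreconnected
  have hext : (closure V)ᶜ.Nonempty := by
    rw [nonempty_compl]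
    exact fun h => NormedSpace.unbounded_univ ℝ E (h ▸ hVb.closure)
  have hcover : (frontier V)ᶜ ⊆ V ∪ (closure V)ᶜ := by
    rw [hVo.frontier_eq, compl_sdiff, union_comm]
  obtain ⟨y, hy⟩ := hext
  obtain ⟨x, hx⟩ := hV
  have hxF : x ∉ frontier V := fun h => (hVo.frontier_eq ▸ h).2 hx
  have hyF : y ∉ frontier V := fun h => hy (frontier_subset_closure h)
  obtain ⟨z, -, hzV, hzc⟩ := hconn V (closure V)ᶜ hVo isClosed_closure.isOpen_compl hcover
    ⟨x, hxF, hx⟩ ⟨y, hyF, hy⟩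
  exact hzc (subset_closure hzV)

theorem isPreconnected_inter_preimage_of_injOn {X Y : Type*} [TopologicalSpace X]
    [TopologicalSpace Y] [T2Space Y] {f : X → Y} {K : Set X} {S : Set Y} (hK : IsCompact K)
    (hf : ContinuousOn f K) (hinj : InjOn f K) (hS : IsPreconnected S) (hSK : S ⊆ f '' K) :
    IsPreconnected (K ∩ f ⁻¹' S) := by
  have : CompactSpace K := isCompact_iff_compactSpace.1 hK
  have hcont : Continuous (K.domRestrict f) := continuousOn_iff_continuous_domRestrict.1 hf
  have hpre : IsPreconnected (K.domRestrict f ⁻¹' S) :=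
    hS.preimage_of_isClosedMap hinj.injective hcont.isClosedMap
      (by rwa [range_domRestrict])
  rw [← Subtype.image_preimage_coe]
  exact hpre.image _ continuous_subtype_val.continuousOn

/-! ### Alternating rays in the plane -/

theorem sub_div_sub_mem_slitPlane {x y z : ℂ} (h : dist y x < dist z x) :
    (z - y) / (z - x) ∈ slitPlane := by
  have hzx : z - x ≠ 0 := sub_ne_zero.2 (dist_pos.1 (dist_nonneg.trans_lt h))
  have hsplit : (z - y) / (z - x) = 1 + (x - y) / (z - x) := by
    rw [one_add_div hzx]
    ring
  rw [hsplit]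
  apply mem_slitPlane_of_norm_lt_one
  rwa [norm_div, div_lt_one (norm_pos_iff.2 hzx), ← dist_eq_norm, ← dist_eq_norm, dist_comm]

theorem exists_continuousOn_exp_eq_div {X K : Set ℂ} (hX : IsPreconnected X) (hK : IsClosed K)
    (hXK : Disjoint X K) {a b : ℂ} (ha : a ∈ X) (hb : b ∈ X) :
    ∃ l : ℂ → ℂ, ContinuousOn l K ∧ ∀ z ∈ K, exp (l z) = (z - a) / (z - b) := by
  have hne : ∀ x ∈ X, ∀ z ∈ K, z - x ≠ 0 := fun x hx z hz h =>
    disjoint_left.1 hXK hx (sub_eq_zero.1 h ▸ hz)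
  refine hX.induction₂ (fun a b => a ∈ X → b ∈ X → ∃ l : ℂ → ℂ, ContinuousOn l K ∧
    ∀ z ∈ K, exp (l z) = (z - a) / (z - b)) ?near ?trans ?symm ha hb ha hb
  case near =>
    intro x hx
    obtain ⟨ε, hε, hball⟩ := Metric.isOpen_iff.1 hK.isOpen_compl x (disjoint_left.1 hXK hx)
    filter_upwards [mem_nhdsWithin_of_mem_nhds (ball_mem_nhds x hε)] with y hy _ _
    have hslit : ∀ z ∈ K, (z - y) / (z - x) ∈ slitPlane := fun z hz =>
      sub_div_sub_mem_slitPlane <| (mem_ball.1 hy).trans_le <| not_lt.1 fun h => hball h hz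
    refine ⟨fun z => -log ((z - y) / (z - x)), ?_, fun z hz => ?_⟩
    · exact ((ContinuousOn.div (by fun_prop) (by fun_prop) (hne x hx)).clog hslit).neg
    · rw [exp_neg, exp_log (slitPlane_ne_zero (hslit z hz)), inv_div]
  case trans =>
    intro x y z hx hy hz hxy hyz _ _
    obtain ⟨l₁, hl₁, hl₁e⟩ := hxy hx hy
    obtain ⟨l₂, hl₂, hl₂e⟩ := hyz hy hz
    refine ⟨fun w => l₁ w + l₂ w, hl₁.add hl₂, fun w hw => ?_⟩
    rw [exp_add, hl₁e w hw, hl₂e w hw, div_mul_div_cancel₀ (hne y hy w hw)]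
  case symm =>
    intro x y hx hy hxy _ _
    obtain ⟨l, hl, hle⟩ := hxy hx hy
    exact ⟨fun w => -l w, hl.neg, fun w hw => by rw [exp_neg, hle w hw, inv_div]⟩

/-- `ContainsSpoke X p a` says that `X` contains the segment from `p` to `p + a` without its
endpoint `p`. It records a direction in which a critical point `p` is approached by
`X = {u > u p}` or `X = {u < u p}`, neither of which contains `p`. -/
def ContainsSpoke (X : Set ℂ) (p a : ℂ) : Prop :=
  ∀ t ∈ Ioc (0 : ℝ) 1, p + t * a ∈ X

theorem ContainsSpoke.add_mem {X : Set ℂ} {p a : ℂ} (h : ContainsSpoke X p a) : p + a ∈ X := by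
  simpa using h 1 (right_mem_Ioc.2 one_pos)

theorem ContainsSpoke.tendsto {X : Set ℂ} {p a : ℂ} (h : ContainsSpoke X p a) :
    Tendsto (fun t : ℝ => p + t * a) (𝓝[>] 0) (𝓝[X] p) := by
  refine tendsto_nhdsWithin_iff.2 ⟨?_, ?_⟩
  · have hcont : ContinuousAt (fun t : ℝ => p + t * a) 0 := by fun_prop
    simpa using hcont.tendsto.mono_left nhdsWithin_le_nhds
  · filter_upwards [Ioc_mem_nhdsGT one_pos] with t ht using h t ht

theorem ContainsSpoke.mem_closure {X : Set ℂ} {p a : ℂ} (h : ContainsSpoke X p a) :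
    p ∈ closure X :=
  mem_closure_iff_nhdsWithin_neBot.2 h.tendsto.neBot

theorem ContainsSpoke.one_sub_div_mem_slitPlane {X : Set ℂ} {p a z : ℂ} (h : ContainsSpoke X p a)
    (hz : z ∉ X) (hzp : z ≠ p) : 1 - a / (z - p) ∈ slitPlane := by
  have hzp' : z - p ≠ 0 := sub_ne_zero.2 hzp
  rw [mem_slitPlane_iff_not_le_zero]
  intro hle
  obtain ⟨hre, him⟩ := Complex.le_def.1 (sub_nonpos.1 hle)
  set r : ℝ := (a / (z - p)).re
  have hr : a / (z - p) = r := Complex.ext rfl him.symm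
  have hr1 : 1 ≤ r := hre
  have hr0 : (r : ℂ) ≠ 0 := ofReal_ne_zero.2 (by linarith)
  have hmem := h r⁻¹ ⟨by positivity, inv_le_one_of_one_le₀ hr1⟩
  have hpt : p + (r⁻¹ : ℝ) * a = z := by
    rw [(div_eq_iff hzp').1 hr, ofReal_inv, inv_mul_cancel_left₀ hr0, add_sub_cancel]
  exact hz (hpt ▸ hmem)

theorem ContainsSpoke.neg_div_mem_slitPlane {X Y : Set ℂ} {p a e : ℂ} (ha : ContainsSpoke Y p a)
    (he : ContainsSpoke X p e) (hYX : Disjoint Y (closure X)) (hp : p ∉ X) :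
    -a / e ∈ slitPlane := by
  have hpY : p ∉ Y := disjoint_right.1 hYX he.mem_closure
  have hdisj : ∀ z ∈ X, z ∉ Y := fun z hz => disjoint_right.1 hYX (subset_closure hz)
  have he0 : e ≠ 0 := by
    rintro rfl
    exact hp (by simpa using he.add_mem)
  rw [mem_slitPlane_iff_not_le_zero]
  intro hle
  rw [neg_div, neg_nonpos] at hle
  obtain ⟨hre, him⟩ := Complex.le_def.1 hle
  set r : ℝ := (a / e).re
  have har : a = r * e := (div_eq_iff he0).1 (Complex.ext rfl him.symm)
  have hr0 : r ≠ 0 := by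
    intro hr
    exact hpY (by simpa [har, hr] using ha.add_mem)
  rcases le_total r 1 with hr1 | hr1
  · exact hdisj (p + r * e) (he r ⟨hre.lt_of_ne' hr0, hr1⟩) (har ▸ ha.add_mem)
  · refine hdisj (p + e) he.add_mem ?_
    have hmem := ha r⁻¹ ⟨by positivity, inv_le_one_of_one_le₀ hr1⟩
    rwa [har, ofReal_inv, inv_mul_cancel_left₀ (ofReal_ne_zero.2 hr0)] at hmem

theorem tendsto_arg_one_sub_div {a e : ℂ} (h : -a / e ∈ slitPlane) :
    Tendsto (fun t : ℝ => arg (1 - a / (t * e))) (𝓝[>] 0) (𝓝 (arg (-a / e))) := by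
  have hcont : ContinuousAt (fun t : ℝ => (t : ℂ) + -a / e) 0 := by fun_prop
  have hlim : Tendsto (fun t : ℝ => (t : ℂ) + -a / e) (𝓝[>] 0) (𝓝 (-a / e)) := by
    simpa using hcont.tendsto.mono_left nhdsWithin_le_nhds
  refine ((continuousAt_arg h).tendsto.comp hlim).congr' ?_
  filter_upwards [self_mem_nhdsWithin] with t (ht : 0 < t)
  have ht0 : (t : ℂ) ≠ 0 := ofReal_ne_zero.2 ht.ne'
  rw [Function.comp_apply, ← arg_real_mul (1 - a / (t * e)) ht]
  congr 1
  rw [mul_sub, mul_one, ← div_div, div_right_comm, mul_div_cancel₀ _ ht0, neg_div, sub_eq_add_neg]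

theorem ContainsSpoke.continuousOn_log_one_sub_div {X Y : Set ℂ} {p a : ℂ}
    (h : ContainsSpoke Y p a) (hYX : Disjoint Y X) (hp : p ∉ X) :
    ContinuousOn (fun z => log (1 - a / (z - p))) X := by
  have hzp : ∀ z ∈ X, z ≠ p := fun z hz => ne_of_mem_of_not_mem hz hp
  refine ContinuousOn.clog (continuousOn_const.sub (continuousOn_const.div (by fun_prop)
    fun z hz => sub_ne_zero.2 (hzp z hz))) fun z hz => ?_
  exact h.one_sub_div_mem_slitPlane (disjoint_right.1 hYX hz) (hzp z hz)

theorem exists_eqOn_add_const_of_exp_comp_eqOn {α : Type*} [TopologicalSpace α] {X : Set α}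
    {f g : α → ℂ} (hX : IsPreconnected X) (hf : ContinuousOn f X) (hg : ContinuousOn g X)
    (h : EqOn (exp ∘ f) (exp ∘ g) X) :
    ∃ c : ℂ, EqOn f (fun z => g z + c) X := by
  rcases X.eq_empty_or_nonempty with rfl | ⟨x, hx⟩
  · exact ⟨0, eqOn_empty _ _⟩
  have hexp : ∀ z ∈ X, exp (f z - g z) = 1 := fun z hz => by
    rw [exp_sub, show exp (f z) = exp (g z) from h hz, div_self (exp_ne_zero _)]
  refine ⟨f x - g x, fun z hz => sub_eq_iff_eq_add'.1 ?_⟩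
  exact isCoveringMap_exp.constOn_of_comp hX (hf.sub hg)
    (fun y hy z hz => Subtype.ext ((hexp y hy).trans (hexp z hz).symm)) hz hx

theorem exists_continuousOn_closure_eqOn_log_sub_log {X Y : Set ℂ} {p a b : ℂ}
    (hX : IsPreconnected X) (hY : IsPreconnected Y) (hYX : Disjoint Y (closure X)) (hp : p ∉ X)
    (ha : ContainsSpoke Y p a) (hb : ContainsSpoke Y p b) :
    ∃ l : ℂ → ℂ, ContinuousOn l (closure X) ∧
      EqOn l (fun z => log (1 - a / (z - p)) - log (1 - b / (z - p))) X := by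
  have hYX' : Disjoint Y X := hYX.mono_right subset_closure
  obtain ⟨l, hlc, hle⟩ :=
    exists_continuousOn_exp_eq_div hY isClosed_closure hYX ha.add_mem hb.add_mem
  have hexp : EqOn (exp ∘ fun z => log (1 - a / (z - p)) - log (1 - b / (z - p))) (exp ∘ l) X := by
    intro z hz
    have hzp : z ≠ p := ne_of_mem_of_not_mem hz hp
    have hzp' : z - p ≠ 0 := sub_ne_zero.2 hzp
    have hzY : z ∉ Y := disjoint_right.1 hYX' hz
    rw [Function.comp_apply, Function.comp_apply, hle z (subset_closure hz), exp_sub,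
      exp_log (slitPlane_ne_zero (ha.one_sub_div_mem_slitPlane hzY hzp)),
      exp_log (slitPlane_ne_zero (hb.one_sub_div_mem_slitPlane hzY hzp)),
      one_sub_div hzp', one_sub_div hzp', div_div_div_cancel_right₀ hzp', sub_sub, sub_sub]
  obtain ⟨c, hc⟩ := exists_eqOn_add_const_of_exp_comp_eqOn hX
    ((ha.continuousOn_log_one_sub_div hYX' hp).sub (hb.continuousOn_log_one_sub_div hYX' hp))
    (hlc.mono subset_closure) hexp
  exact ⟨fun z => l z + c, hlc.add continuousOn_const, hc.symm⟩

theorem arg_neg_div_sub_arg_neg_div_eq {X Y : Set ℂ} {p a b e₁ e₂ : ℂ}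
    (hX : IsPreconnected X) (hY : IsPreconnected Y) (hYX : Disjoint Y (closure X)) (hp : p ∉ X)
    (ha : ContainsSpoke Y p a) (hb : ContainsSpoke Y p b)
    (he₁ : ContainsSpoke X p e₁) (he₂ : ContainsSpoke X p e₂) :
    arg (-a / e₁) - arg (-b / e₁) = arg (-a / e₂) - arg (-b / e₂) := by
  -- Both sides are the value at `p` of the imaginary part of one continuous branch on `closure X`
  -- of `log ((z - (p + a)) / (z - (p + b)))`, which exists because `Y` joins `p + a` to `p + b`.
  obtain ⟨l, hlc, hlX⟩ := exists_continuousOn_closure_eqOn_log_sub_log hX hY hYX hp ha hb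
  suffices hlim : ∀ e, ContainsSpoke X p e → arg (-a / e) - arg (-b / e) = (l p).im from
    (hlim e₁ he₁).trans (hlim e₂ he₂).symm
  intro e he
  have hl : Tendsto (fun t : ℝ => (l (p + t * e)).im) (𝓝[>] 0) (𝓝 (l p).im) :=
    (continuous_im.tendsto _).comp <| (hlc p he.mem_closure).tendsto.comp <|
      he.tendsto.mono_right (nhdsWithin_mono p subset_closure)
  have hL := (tendsto_arg_one_sub_div (ha.neg_div_mem_slitPlane he hYX hp)).sub
    (tendsto_arg_one_sub_div (hb.neg_div_mem_slitPlane he hYX hp))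
  refine tendsto_nhds_unique (hL.congr' ?_) hl
  filter_upwards [Ioc_mem_nhdsGT one_pos] with t ht
  simp only [hlX (he t ht), sub_im, log_im, add_sub_cancel_left]

theorem arg_neg_exp_mul_I {x : ℝ} (h₀ : 0 < x) (h₁ : x ≤ 2 * Real.pi) :
    arg (-exp (x * I)) = x - Real.pi := by
  have hneg : -exp (x * I) = exp ((x - Real.pi : ℝ) * I) := by
    rw [ofReal_sub, sub_mul, exp_sub, exp_pi_mul_I, div_neg, div_one]
  rw [hneg, arg_exp_mul_I, toIocMod_eq_self]
  constructor <;> linarith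

theorem arg_neg_exp_neg_mul_I {x : ℝ} (h₀ : 0 ≤ x) (h₁ : x < 2 * Real.pi) :
    arg (-exp (-(x * I))) = Real.pi - x := by
  have hper : exp (-(x * I)) = exp ((2 * Real.pi - x : ℝ) * I) := by
    rw [ofReal_sub, sub_mul, exp_sub, exp_neg, ofReal_mul, ofReal_ofNat, exp_two_pi_mul_I, one_div]
  rw [hper, arg_neg_exp_mul_I (by linarith) (by linarith)]
  ring

theorem not_containsSpoke_of_alternating {X Y : Set ℂ} {p d : ℂ} {α : ℝ} (hα₀ : 0 < α)
    (hα : 3 * α < 2 * Real.pi) (hX : IsPreconnected X) (hY : IsPreconnected Y)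
    (hYX : Disjoint Y (closure X)) (hp : p ∉ X)
    (hneg : ContainsSpoke Y p (d * exp (-(α * I)))) (h₀ : ContainsSpoke X p d)
    (h₁ : ContainsSpoke Y p (d * exp (α * I))) :
    ¬ ContainsSpoke X p (d * exp (2 * α * I)) := by
  intro h₂
  have hd : d ≠ 0 := by
    rintro rfl
    exact hp (by simpa using h₀.add_mem)
  have hdiv : ∀ x y : ℂ, -(d * exp x) / (d * exp y) = -exp (x - y) := fun x y => by
    rw [neg_div, mul_div_mul_left _ _ hd, exp_sub]
  have hdiv₀ : ∀ x : ℂ, -(d * exp x) / d = -exp x := fun x => by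
    simpa using hdiv x 0
  have hjump := arg_neg_div_sub_arg_neg_div_eq hX hY hYX hp h₁ hneg h₀ h₂
  have hα₁ : α * I - 2 * α * I = -(α * I) := by ring
  have hα₃ : -(α * I) - 2 * α * I = -((3 * α : ℝ) * I) := by push_cast; ring
  rw [hdiv₀, hdiv₀, hdiv, hdiv, hα₁, hα₃, arg_neg_exp_mul_I hα₀ (by linarith),
    arg_neg_exp_neg_mul_I hα₀.le (by linarith),
    arg_neg_exp_neg_mul_I (by linarith) (by linarith)] at hjump
  linarith [Real.pi_pos]

/-! ### Harmonic functions -/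

theorem exists_analyticAt_eventually_re_eq {u : ℂ → ℝ} {p : ℂ} (hu : HarmonicAt u p) :
    ∃ F : ℂ → ℂ, AnalyticAt ℂ F p ∧ ∀ᶠ z in 𝓝 p, (F z).re = u z := by
  obtain ⟨R, hR, hball⟩ := eventually_nhds_iff_ball.1 hu.eventually
  obtain ⟨F, hF, hFu⟩ := HarmonicOnNhd.exists_analyticOnNhd_ball_re_eq hball
  exact ⟨F, hF p (mem_ball_self hR), hFu.eventuallyEq_of_mem (ball_mem_nhds p hR)⟩

theorem eventually_eq_of_isLocalMax_of_harmonicAt {u : ℂ → ℝ} {m : ℂ} (hu : HarmonicAt u m)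
    (hmax : IsLocalMax u m) : ∀ᶠ z in 𝓝 m, u z = u m := by
  obtain ⟨F, hF, hFu⟩ := exists_analyticAt_eventually_re_eq hu
  have hnorm : norm ∘ (fun z => exp (F z)) =ᶠ[𝓝 m] fun z => Real.exp (u z) := by
    filter_upwards [hFu] with z hz
    rw [Function.comp_apply, norm_exp, hz]
  have hexp : ∀ᶠ z in 𝓝 m, exp (F z) = exp (F m) := by
    apply eventually_eq_of_isLocalMax_norm
    · filter_upwards [hF.eventually_analyticAt] with z hz using hz.differentiableAt.cexp
    · exact (hmax.comp_mono Real.exp_monotone).congr hnorm.symm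
  filter_upwards [hexp, hnorm] with z hz hzu
  have hzm := hzu.symm.trans ((congrArg norm hz).trans hnorm.self_of_nhds)
  exact Real.exp_injective hzm

theorem le_of_forall_mem_frontier_le_of_harmonicContOnCl {u : ℂ → ℝ} {V : Set ℂ} {c : ℝ}
    (hVo : IsOpen V) (hVb : Bornology.IsBounded V) (hu : HarmonicContOnCl u V)
    (hc : ∀ z ∈ frontier V, u z ≤ c) {z : ℂ} (hz : z ∈ V) : u z ≤ c := by
  have hVcl : IsCompact (closure V) := hVb.isCompact_closure
  obtain ⟨m, hm, hmax⟩ := hVcl.exists_isMaxOn ⟨z, subset_closure hz⟩ hu.continuousOn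
  by_contra! hcz
  have hcm : c < u m := hcz.trans_le (hmax (subset_closure hz))
  set M := closure V ∩ u ⁻¹' {u m}
  have hMV : M ⊆ V := by
    rintro x ⟨hx, hxm⟩
    by_contra hxV
    exact (hc x (hVo.frontier_eq ▸ ⟨hx, hxV⟩)).not_gt (hcm.trans_eq (Eq.symm hxm))
  have hMclosed : IsClosed M := hu.continuousOn.preimage_isClosed_of_isClosed
    isClosed_closure isClosed_singleton
  have hMopen : IsOpen M := by
    refine isOpen_iff_mem_nhds.2 fun x hx => ?_
    have hxm : u x = u m := hx.2
    have hnhds : V ∈ 𝓝 x := hVo.mem_nhds (hMV hx)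
    have hmaxx : IsLocalMax u x := by
      filter_upwards [hnhds] with y hy using (hmax (subset_closure hy)).trans_eq hxm.symm
    filter_upwards [hnhds, eventually_eq_of_isLocalMax_of_harmonicAt
      (hu.harmonicOnNhd x (hMV hx)) hmaxx] with y hy hyx
    exact ⟨subset_closure hy, hyx.trans hxm⟩
  have hMuniv : M = univ := IsClopen.eq_univ ⟨hMclosed, hMopen⟩ ⟨m, hm, rfl⟩
  exact NormedSpace.unbounded_univ ℝ ℂ (hVb.subset (hMuniv ▸ hMV))

theorem deriv_eq_zero_of_fderiv_re_eq_zero {F : ℂ → ℂ} {p : ℂ} (hF : DifferentiableAt ℂ F p)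
    (h : fderiv ℝ (fun z => (F z).re) p = 0) : deriv F p = 0 := by
  have hre : fderiv ℝ (fun z => (F z).re) p = reCLM ∘L (fderiv ℂ F p).restrictScalars ℝ :=
    (reCLM.hasFDerivAt.comp p (hF.hasFDerivAt.restrictScalars ℝ)).fderiv
  have happly : ∀ a : ℂ, (a * deriv F p).re = 0 := fun a => by
    rw [← smul_eq_mul, ← fderiv_eq_smul_deriv]
    exact DFunLike.congr_fun (hre.symm.trans h) a
  exact Complex.ext (by simpa using happly 1) (by simpa using happly I)

theorem exists_sub_eventuallyEq_pow_smul_of_deriv_eq_zero {𝕜 E : Type*}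
    [NontriviallyNormedField 𝕜] [CharZero 𝕜] [NormedAddCommGroup E] [NormedSpace 𝕜 E]
    [CompleteSpace E] {f : 𝕜 → E} {p : 𝕜} (hf : AnalyticAt 𝕜 f p) (hd : deriv f p = 0)
    (hne : ¬ ∀ᶠ z in 𝓝 p, f z = f p) :
    ∃ n, 2 ≤ n ∧ ∃ g : 𝕜 → E, AnalyticAt 𝕜 g p ∧ g p ≠ 0 ∧
      (fun z => f z - f p) =ᶠ[𝓝 p] fun z => (z - p) ^ n • g z := by
  have hsub : AnalyticAt 𝕜 (fun z => f z - f p) p := hf.sub analyticAt_const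
  have htop : analyticOrderAt (fun z => f z - f p) p ≠ ⊤ := by
    simpa only [ne_eq, analyticOrderAt_eq_top, sub_eq_zero] using hne
  have horder := hf.analyticOrderAt_deriv_add_one
  have hd1 : 1 ≤ analyticOrderAt (deriv f) p :=
    Order.one_le_iff_ne_zero.2 (hf.deriv.analyticOrderAt_ne_zero.2 hd)
  refine ⟨analyticOrderNatAt (fun z => f z - f p) p, ?_, hsub.analyticOrderAt_ne_top.1 htop⟩
  rw [← Nat.cast_le (α := ℕ∞), Nat.cast_analyticOrderNatAt htop, ← horder]
  simpa [one_add_one_eq_two] using add_le_add_left hd1 1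

theorem exists_forall_norm_eq_one_re_pow_mul_pos {g : ℂ → ℂ} {p : ℂ} {U : Set ℂ} {n : ℕ}
    (hn : n ≠ 0) (hg : ContinuousAt g p) (hgp : g p ≠ 0) (hU : U ∈ 𝓝 p) :
    ∃ d : ℂ, ∀ w : ℂ, ‖w‖ = 1 → ∀ t ∈ Ioc (0 : ℝ) 1,
      p + t * (d * w) ∈ U ∧ 0 < (d ^ n * g (p + t * (d * w))).re := by
  obtain ⟨e, he⟩ := IsAlgClosed.exists_pow_nat_eq (conj (g p)) hn.bot_lt
  have hpos : ∀ᶠ z in 𝓝 p, 0 < (e ^ n * g z).re := by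
    have hcont : ContinuousAt (fun z => (e ^ n * g z).re) p :=
      continuous_re.continuousAt.comp (continuousAt_const.mul hg)
    refine hcont.eventually_const_lt (?_ : 0 < (e ^ n * g p).re)
    rw [he, ← normSq_eq_conj_mul_self, ofReal_re]
    exact normSq_pos.2 hgp
  obtain ⟨r, hr, hball⟩ := eventually_nhds_iff_ball.1 (hpos.and hU)
  set s : ℝ := r / (‖e‖ + 1) with hs
  have hs₀ : 0 < s := by positivity
  have hse : s * ‖e‖ < r := by
    rw [hs, div_mul_eq_mul_div, div_lt_iff₀ (by positivity)]
    linarith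
  refine ⟨s * e, fun w hw t ht => ?_⟩
  have hmem : p + t * (s * e * w) ∈ ball p r := by
    rw [mem_ball_iff_norm, add_sub_cancel_left, norm_mul, norm_mul, norm_mul, hw, mul_one,
      norm_real, norm_real, Real.norm_of_nonneg ht.1.le, Real.norm_of_nonneg hs₀.le]
    exact (mul_le_of_le_one_left (by positivity) ht.2).trans_lt hse
  refine ⟨(hball _ hmem).2, ?_⟩
  rw [mul_pow, mul_assoc, ← ofReal_pow, re_ofReal_mul]
  exact mul_pos (pow_pos hs₀ n) (hball _ hmem).1

theorem exists_forall_norm_eq_one_sub_eq_re_pow_mul {u : ℂ → ℝ} {p : ℂ} {U : Set ℂ}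
    (hu : HarmonicAt u p) (hd : fderiv ℝ u p = 0) (hne : ¬ ∀ᶠ z in 𝓝 p, u z = u p)
    (hU : U ∈ 𝓝 p) :
    ∃ d : ℂ, ∃ n : ℕ, 2 ≤ n ∧ ∀ w : ℂ, ‖w‖ = 1 → ∀ t ∈ Ioc (0 : ℝ) 1,
      p + t * (d * w) ∈ U ∧
        ∃ c : ℂ, 0 < c.re ∧ u (p + t * (d * w)) - u p = (w ^ n * c).re := by
  obtain ⟨F, hF, hFu⟩ := exists_analyticAt_eventually_re_eq hu
  have hFup : (F p).re = u p := hFu.self_of_nhds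
  have hderiv : deriv F p = 0 := deriv_eq_zero_of_fderiv_re_eq_zero hF.differentiableAt
    ((EventuallyEq.fderiv_eq hFu).trans hd)
  have hFne : ¬ ∀ᶠ z in 𝓝 p, F z = F p := fun h => hne <| by
    filter_upwards [h, hFu] with z hz hzu
    rw [← hzu, hz, hFup]
  obtain ⟨n, hn, g, hg, hgp, hFg⟩ :=
    exists_sub_eventuallyEq_pow_smul_of_deriv_eq_zero hF hderiv hFne
  have hug : ∀ᶠ z in 𝓝 p, u z - u p = ((z - p) ^ n * g z).re := by
    filter_upwards [hFu, hFg] with z hzu hzg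
    rw [← hzu, ← hFup, ← sub_re, hzg, smul_eq_mul]
  have hn0 : n ≠ 0 := by omega
  obtain ⟨d, hray⟩ := exists_forall_norm_eq_one_re_pow_mul_pos hn0 hg.continuousAt hgp
    (inter_mem hU hug)
  refine ⟨d, n, hn, fun w hw t ht => ?_⟩
  obtain ⟨⟨hzU, hzu⟩, hpos⟩ := hray w hw t ht
  refine ⟨hzU, (t ^ n : ℝ) * (d ^ n * g (p + t * (d * w))), ?_, ?_⟩
  · rw [re_ofReal_mul]
    exact mul_pos (pow_pos ht.1 n) hpos
  · rw [hzu, add_sub_cancel_left, ofReal_pow]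
    ring_nf

theorem exists_containsSpoke_of_fderiv_eq_zero {u : ℂ → ℝ} {p : ℂ} {U : Set ℂ}
    (hu : HarmonicAt u p) (hd : fderiv ℝ u p = 0) (hne : ¬ ∀ᶠ z in 𝓝 p, u z = u p)
    (hU : U ∈ 𝓝 p) :
    ∃ d : ℂ, ∃ n : ℕ, 2 ≤ n ∧ ∀ w : ℂ,
      (w ^ n = 1 → ContainsSpoke {z ∈ U | u p < u z} p (d * w)) ∧
      (w ^ n = -1 → ContainsSpoke {z ∈ U | u z < u p} p (d * w)) := by
  obtain ⟨d, n, hn, hray⟩ := exists_forall_norm_eq_one_sub_eq_re_pow_mul hu hd hne hU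
  have hn0 : n ≠ 0 := by omega
  have hnorm : ∀ w : ℂ, ‖w ^ n‖ = 1 → ‖w‖ = 1 := fun w hw =>
    (pow_eq_one_iff_of_nonneg (norm_nonneg w) hn0).1 (by rwa [← norm_pow])
  refine ⟨d, n, hn, fun w => ⟨fun hw t ht => ?_, fun hw t ht => ?_⟩⟩
  · obtain ⟨hzU, c, hc, hsub⟩ := hray w (hnorm w (by rw [hw, norm_one])) t ht
    rw [hw, one_mul] at hsub
    exact ⟨hzU, sub_pos.1 (hsub ▸ hc)⟩
  · obtain ⟨hzU, c, hc, hsub⟩ := hray w (hnorm w (by rw [hw, norm_neg, norm_one])) t ht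
    rw [hw, neg_one_mul, neg_re] at hsub
    exact ⟨hzU, by linarith⟩

/-! ### Superlevel sets of harmonic functions -/

theorem exists_mem_closure_connectedComponentIn_superlevel {u : ℂ → ℝ} {Ω : Set ℂ} {c : ℝ} {x : ℂ}
    (hΩo : IsOpen Ω) (hΩb : Bornology.IsBounded Ω) (hu : HarmonicContOnCl u Ω) (hx : x ∈ Ω)
    (hcx : c < u x) :
    ∃ q ∈ closure (connectedComponentIn (Ω ∩ u ⁻¹' Ioi c) x), q ∈ frontier Ω ∧ c < u q := by
  set V := connectedComponentIn (Ω ∩ u ⁻¹' Ioi c) x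
  have hOo : IsOpen (Ω ∩ u ⁻¹' Ioi c) :=
    (hu.continuousOn.mono subset_closure).isOpen_inter_preimage hΩo isOpen_Ioi
  have hVΩ : V ⊆ Ω := (connectedComponentIn_subset _ _).trans inter_subset_left
  by_contra! hno
  refine hcx.not_ge (le_of_forall_mem_frontier_le_of_harmonicContOnCl hOo.connectedComponentIn
    (hΩb.subset hVΩ) (hu.mono hVΩ) (fun q hq => ?_) (mem_connectedComponentIn ⟨hx, hcx⟩))
  have hqcl : q ∈ closure V := frontier_subset_closure hq
  by_cases hqΩ : q ∈ Ω
  · have hqO := frontier_connectedComponentIn_subset hOo x hq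
    rw [hOo.frontier_eq] at hqO
    exact not_lt.1 fun hlt => hqO.2 ⟨hqΩ, hlt⟩
  · exact hno q hqcl (hΩo.frontier_eq ▸ ⟨closure_mono hVΩ hqcl, hqΩ⟩)

theorem isPreconnected_superlevel_closure {u : ℂ → ℝ} {Ω : Set ℂ} {c : ℝ} (hΩo : IsOpen Ω)
    (hΩb : Bornology.IsBounded Ω) (hu : HarmonicContOnCl u Ω)
    (hfr : IsPreconnected {z ∈ frontier Ω | c < u z}) :
    IsPreconnected {z ∈ closure Ω | c < u z} := by
  have hA : {z ∈ frontier Ω | c < u z} ⊆ {z ∈ closure Ω | c < u z} :=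
    fun z hz => ⟨frontier_subset_closure hz.1, hz.2⟩
  have hreach : ∀ x ∈ {z ∈ closure Ω | c < u z}, ∃ q ∈ {z ∈ frontier Ω | c < u z},
      ∃ T ⊆ {z ∈ closure Ω | c < u z}, q ∈ T ∧ x ∈ T ∧ IsPreconnected T := by
    rintro x ⟨hxcl, hcx⟩
    by_cases hx : x ∈ Ω
    · obtain ⟨q, hqV, hq⟩ :=
        exists_mem_closure_connectedComponentIn_superlevel hΩo hΩb hu hx hcx
      refine ⟨q, hq, insert q (connectedComponentIn (Ω ∩ u ⁻¹' Ioi c) x),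
        insert_subset (hA hq) fun z hz => ?_, mem_insert _ _,
        mem_insert_of_mem _ (mem_connectedComponentIn ⟨hx, hcx⟩),
        isPreconnected_connectedComponentIn.subset_closure (subset_insert _ _)
          (insert_subset hqV subset_closure)⟩
      have hzO := connectedComponentIn_subset _ _ hz
      exact ⟨subset_closure hzO.1, hzO.2⟩
    · exact ⟨x, ⟨hΩo.frontier_eq ▸ ⟨hxcl, hx⟩, hcx⟩, {x}, singleton_subset_iff.2 ⟨hxcl, hcx⟩,
        rfl, rfl, isPreconnected_singleton⟩
  refine isPreconnected_of_forall_pair fun x hx y hy => ?_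
  obtain ⟨q, hq, S, hS, hqS, hxS, hSc⟩ := hreach x hx
  obtain ⟨r, hr, T, hT, hrT, hyT, hTc⟩ := hreach y hy
  exact ⟨S ∪ {z ∈ frontier Ω | c < u z} ∪ T, union_subset (union_subset hS hA) hT,
    Or.inl (Or.inl hxS), Or.inr hyT,
    (hSc.union q hqS hq hfr).union r (Or.inr hr) hrT hTc⟩

theorem not_eventually_eq_of_countable_frontier {u : ℂ → ℝ} {Ω : Set ℂ} {p : ℂ} (hΩo : IsOpen Ω)
    (hΩb : Bornology.IsBounded Ω) (hu : HarmonicContOnCl u Ω) (hp : p ∈ Ω)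
    (hcount : {z ∈ frontier Ω | u z = u p}.Countable) : ¬ ∀ᶠ z in 𝓝 p, u z = u p := by
  intro hloc
  set C := connectedComponentIn Ω p
  have hCΩ : C ⊆ Ω := connectedComponentIn_subset Ω p
  have hpC : p ∈ C := mem_connectedComponentIn hp
  have han : AnalyticOnNhd ℝ u C := fun z hz => HarmonicAt.analyticAt (hu.harmonicOnNhd z (hCΩ hz))
  have hconst : EqOn u (fun _ => u p) C := han.eqOn_of_preconnected_of_eventuallyEq
    analyticOnNhd_const isPreconnected_connectedComponentIn hpC hloc
  have hconstcl : EqOn u (fun _ => u p) (closure C) :=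
    hconst.of_subset_closure (hu.mono hCΩ).continuousOn continuousOn_const subset_closure subset_rfl
  refine not_countable_frontier (by simp [rank_real_complex]) hΩo.connectedComponentIn
    (hΩb.subset hCΩ) ⟨p, hpC⟩ (hcount.mono fun z hz => ?_)
  exact ⟨frontier_connectedComponentIn_subset hΩo p hz, hconstcl (frontier_subset_closure hz)⟩

theorem exp_pi_div_mul_I_pow {n : ℕ} (hn : n ≠ 0) : exp ((Real.pi / n : ℝ) * I) ^ n = -1 := by
  rw [← exp_nat_mul, ofReal_div, ofReal_natCast, ← mul_assoc,
    mul_div_cancel₀ _ (Nat.cast_ne_zero.2 hn), exp_pi_mul_I]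

theorem fderiv_ne_zero_of_isPreconnected_frontier {u : ℂ → ℝ} {Ω : Set ℂ} {p : ℂ}
    (hΩo : IsOpen Ω) (hΩb : Bornology.IsBounded Ω) (hu : HarmonicContOnCl u Ω) (hp : p ∈ Ω)
    (hgt : IsPreconnected {z ∈ frontier Ω | u p < u z})
    (hlt : IsPreconnected {z ∈ frontier Ω | u z < u p})
    (heq : {z ∈ frontier Ω | u z = u p}.Countable) : fderiv ℝ u p ≠ 0 := by
  intro hd
  obtain ⟨d, n, hn, hspoke⟩ := exists_containsSpoke_of_fderiv_eq_zero (hu.harmonicOnNhd p hp) hd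
    (not_eventually_eq_of_countable_frontier hΩo hΩb hu hp heq)
    (mem_of_superset (hΩo.mem_nhds hp) subset_closure)
  have hgtcl : IsPreconnected {z ∈ closure Ω | u p < u z} :=
    isPreconnected_superlevel_closure hΩo hΩb hu hgt
  have hltcl : IsPreconnected {z ∈ closure Ω | u z < u p} := by
    simpa using isPreconnected_superlevel_closure (c := -u p) hΩo hΩb hu.neg (by simpa using hlt)
  have hdisj : Disjoint {z ∈ closure Ω | u z < u p} (closure {z ∈ closure Ω | u p < u z}) := by
    have hclosed : IsClosed (closure Ω ∩ u ⁻¹' Ici (u p)) :=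
      hu.continuousOn.preimage_isClosed_of_isClosed isClosed_closure isClosed_Ici
    have hsub := closure_minimal (fun z (hz : z ∈ {z ∈ closure Ω | u p < u z}) =>
      (⟨hz.1, hz.2.le⟩ : z ∈ closure Ω ∩ u ⁻¹' Ici (u p))) hclosed
    exact disjoint_left.2 fun z hz hzcl => hz.2.not_ge (hsub hzcl).2
  have hn2 : (2 : ℝ) ≤ n := by exact_mod_cast hn
  have hroot : exp ((Real.pi / n : ℝ) * I) ^ n = -1 := exp_pi_div_mul_I_pow (by omega)
  refine not_containsSpoke_of_alternating (α := Real.pi / n) (by positivity) ?_ hgtcl hltcl hdisj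
    (fun h => lt_irrefl _ h.2) ((hspoke _).2 ?_) (by simpa using (hspoke 1).1 (one_pow n))
    ((hspoke _).2 hroot) ((hspoke _).1 ?_)
  · rw [mul_div_assoc', div_lt_iff₀ (by linarith)]
    nlinarith [Real.pi_pos]
  · rw [exp_neg, inv_pow, hroot, inv_neg_one]
  · rw [mul_assoc, ← Nat.cast_ofNat, exp_nat_mul, pow_right_comm, hroot, neg_one_sq]

/-! ### Boundary values on the unit circle -/

theorem ordConnected_mul_cos_superlevel {r : ℝ} (hr : 0 ≤ r) (c : ℝ) :
    {θ ∈ Icc (-Real.pi) Real.pi | c < r * Real.cos θ}.OrdConnected := by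
  refine ⟨fun x hx y hy z hz => ⟨ordConnected_Icc.out hx.1 hy.1 hz, ?_⟩⟩
  rcases le_total 0 z with h | h
  · refine hy.2.trans_le (mul_le_mul_of_nonneg_left ?_ hr)
    exact Real.cos_le_cos_of_nonneg_of_le_pi h hy.1.2 hz.2
  · refine hx.2.trans_le (mul_le_mul_of_nonneg_left ?_ hr)
    rw [← Real.cos_neg x, ← Real.cos_neg z]
    exact Real.cos_le_cos_of_nonneg_of_le_pi (neg_nonneg.2 h) (neg_le.1 hx.1.1) (neg_le_neg hz.1)

theorem inner_exp_arg_add_mul_I (v : ℂ) (θ : ℝ) :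
    inner ℝ v (exp ((v.arg + θ : ℝ) * I)) = ‖v‖ * Real.cos θ := by
  have hcos : Real.cos θ =
      Real.cos v.arg * Real.cos (v.arg + θ) + Real.sin v.arg * Real.sin (v.arg + θ) := by
    rw [← Real.cos_sub, sub_add_cancel_left, Real.cos_neg]
  rw [hcos, mul_add, ← mul_assoc, ← mul_assoc, norm_mul_cos_arg, norm_mul_sin_arg, Complex.inner,
    mul_re, conj_re, conj_im, exp_ofReal_mul_I_re, exp_ofReal_mul_I_im]
  ring

theorem exists_mem_Icc_exp_add_mul_I_eq (φ : ℝ) {w : ℂ} (hw : ‖w‖ = 1) :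
    ∃ θ ∈ Icc (-Real.pi) Real.pi, exp ((φ + θ : ℝ) * I) = w := by
  have hnorm : ‖w * exp (-(φ * I))‖ = 1 := by
    rw [norm_mul, hw, one_mul, ← neg_mul, ← ofReal_neg, norm_exp_ofReal_mul_I]
  refine ⟨arg (w * exp (-(φ * I))), ⟨(neg_pi_lt_arg _).le, arg_le_pi _⟩, ?_⟩
  have hpolar := norm_mul_exp_arg_mul_I (w * exp (-(φ * I)))
  rw [hnorm, ofReal_one, one_mul] at hpolar
  rw [ofReal_add, add_mul, exp_add, hpolar, exp_neg, mul_comm,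
    inv_mul_cancel_right₀ (exp_ne_zero _)]

theorem isPreconnected_sphere_inner_superlevel (v : ℂ) (c : ℝ) :
    IsPreconnected {w ∈ sphere (0 : ℂ) 1 | c < inner ℝ v w} := by
  have himage : {w ∈ sphere (0 : ℂ) 1 | c < inner ℝ v w} =
      (fun θ : ℝ => exp ((v.arg + θ : ℝ) * I)) ''
        {θ ∈ Icc (-Real.pi) Real.pi | c < ‖v‖ * Real.cos θ} := by
    apply Subset.antisymm
    · rintro w ⟨hw, hcw⟩
      obtain ⟨θ, hθ, rfl⟩ := exists_mem_Icc_exp_add_mul_I_eq v.arg (mem_sphere_zero_iff_norm.1 hw)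
      exact ⟨θ, ⟨hθ, inner_exp_arg_add_mul_I v θ ▸ hcw⟩, rfl⟩
    · rintro _ ⟨θ, ⟨-, hcθ⟩, rfl⟩
      exact ⟨mem_sphere_zero_iff_norm.2 (norm_exp_ofReal_mul_I _),
        (inner_exp_arg_add_mul_I v θ).symm ▸ hcθ⟩
  rw [himage]
  exact (ordConnected_mul_cos_superlevel (norm_nonneg v) c).isPreconnected.image _ (by fun_prop)

theorem countable_sphere_inner_eq {v : ℂ} (hv : v ≠ 0) (c : ℝ) :
    {w ∈ sphere (0 : ℂ) 1 | inner ℝ v w = c}.Countable := by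
  have him : MapsTo (fun w => (w * conj v).im) {w ∈ sphere (0 : ℂ) 1 | inner ℝ v w = c}
      {√(‖v‖ ^ 2 - c ^ 2), -√(‖v‖ ^ 2 - c ^ 2)} := by
    rintro w ⟨hw, hwc⟩
    rw [Complex.inner] at hwc
    have hnorm : ‖w * conj v‖ = ‖v‖ := by
      rw [norm_mul, mem_sphere_zero_iff_norm.1 hw, one_mul, norm_conj]
    have hsq : (w * conj v).im ^ 2 = ‖v‖ ^ 2 - c ^ 2 := by
      rw [← hnorm, ← hwc, ← normSq_eq_norm_sq, normSq_apply]
      ring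
    rw [← hsq, Real.sqrt_sq_eq_abs]
    exact eq_or_eq_neg_of_abs_eq rfl
  refine him.countable_of_injOn (fun w hw w' hw' h => ?_) (toFinite _).countable
  have hre : (w * conj v).re = (w' * conj v).re := by
    rw [← Complex.inner, ← Complex.inner, hw.2, hw'.2]
  exact mul_right_cancel₀ ((map_ne_zero _).2 hv) (Complex.ext hre h)

theorem exists_ne_zero_forall_inner_eq_zero_of_det_eq_zero {E : Type*} [NormedAddCommGroup E]
    [InnerProductSpace ℝ E] [FiniteDimensional ℝ E] {T : E →L[ℝ] E} (h : T.det = 0) :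
    ∃ v : E, v ≠ 0 ∧ ∀ a, inner ℝ v (T a) = 0 := by
  have hrange : (T : E →ₗ[ℝ] E).range ≠ ⊤ := (LinearMap.range_lt_top_of_det_eq_zero h).ne
  rw [ne_eq, ← Submodule.orthogonal_eq_bot_iff] at hrange
  obtain ⟨v, hv, hv0⟩ := Submodule.exists_mem_ne_zero_of_ne_bot hrange
  exact ⟨v, hv0, fun a => (Submodule.mem_orthogonal' _ _).1 hv _ (LinearMap.mem_range_self _ a)⟩

theorem det_fderiv_ne_zero_of_bijOn_circle {g : ℂ → ℂ} {Ω : Set ℂ} {p : ℂ} (hΩo : IsOpen Ω)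
    (hΩb : Bornology.IsBounded Ω) (hg : HarmonicContOnCl g Ω)
    (hbij : BijOn g (frontier Ω) (sphere 0 1)) (hp : p ∈ Ω) : (fderiv ℝ g p).det ≠ 0 := by
  intro hdet
  obtain ⟨v, hv, horth⟩ := exists_ne_zero_forall_inner_eq_zero_of_det_eq_zero hdet
  have hfr : IsCompact (frontier Ω) :=
    hΩb.isCompact_closure.of_isClosed_subset isClosed_frontier frontier_subset_closure
  have hpre : ∀ S : Set ℂ, IsPreconnected {w ∈ sphere (0 : ℂ) 1 | w ∈ S} →
      IsPreconnected {z ∈ frontier Ω | g z ∈ S} := fun S hS => by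
    convert isPreconnected_inter_preimage_of_injOn hfr
      (hg.continuousOn.mono frontier_subset_closure) hbij.injOn hS
      (hbij.image_eq.symm ▸ sep_subset _ _) using 1
    ext z
    exact and_congr_right fun hz => ⟨fun h => ⟨hbij.mapsTo hz, h⟩, fun h => h.2⟩
  refine fderiv_ne_zero_of_isPreconnected_frontier hΩo hΩb (hg.comp_CLM (innerSL ℝ v)) hp
    (hpre {w | inner ℝ v (g p) < inner ℝ v w} (isPreconnected_sphere_inner_superlevel v _))
    (hpre {w | inner ℝ v w < inner ℝ v (g p)} ?_) ?_ ?_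
  · simpa only [inner_neg_left, mem_ofPred_eq, neg_lt_neg_iff] using
      isPreconnected_sphere_inner_superlevel (-v) (-inner ℝ v (g p))
  · have hmaps : MapsTo g {z ∈ frontier Ω | inner ℝ v (g z) = inner ℝ v (g p)}
        {w ∈ sphere (0 : ℂ) 1 | inner ℝ v w = inner ℝ v (g p)} :=
      fun z hz => ⟨hbij.mapsTo hz.1, hz.2⟩
    exact hmaps.countable_of_injOn (hbij.injOn.mono (sep_subset _ _))
      (countable_sphere_inner_eq hv (inner ℝ v (g p)))
  · rw [((innerSL ℝ v).hasFDerivAt.comp p (hg.differentiableAt hp).hasFDerivAt).fderiv]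
    exact ContinuousLinearMap.ext horth

theorem exists_isOpen_injOn_contDiffOn_leftInvOn {𝕜 E F : Type*} [RCLike 𝕜]
    [NormedAddCommGroup E] [NormedSpace 𝕜 E] [CompleteSpace E] [NormedAddCommGroup F]
    [NormedSpace 𝕜 F] {n : WithTop ℕ∞} {f : E → F} {f' : E ≃L[𝕜] F} {p : E} {U : Set E}
    (hf : ContDiffAt 𝕜 n f p) (hf' : HasFDerivAt f (f' : E →L[𝕜] F) p) (hn₀ : n ≠ 0)
    (hn : n ≠ ∞) (hU : U ∈ 𝓝 p) :
    ∃ V : Set E, p ∈ V ∧ V ⊆ U ∧ IsOpen V ∧ IsOpen (f '' V) ∧ InjOn f V ∧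
      ∃ finv : F → E, ContDiffOn 𝕜 n finv (f '' V) ∧
        (∀ q ∈ V, finv (f q) = q) ∧ ∀ w ∈ f '' V, f (finv w) = w := by
  let e := hf.toOpenPartialHomeomorph f hf' hn₀
  have hpe : p ∈ e.source := hf.mem_toOpenPartialHomeomorph_source hf' hn₀
  have hleft : e.symm (f p) = p := e.left_inv hpe
  have hsymm : ContDiffAt 𝕜 n e.symm (f p) :=
    e.contDiffAt_symm (e.map_source hpe) (hleft.symm ▸ hf') (hleft.symm ▸ hf)
  let e' := e.restrContDiff 𝕜 n hn
  have hpe' : p ∈ e'.source := by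
    rw [OpenPartialHomeomorph.restrContDiff_source]
    exact ⟨hpe, hf, hsymm⟩
  have hV : e'.source ∩ interior U ⊆ e'.source := inter_subset_left
  have hopen : IsOpen (e'.source ∩ interior U) := e'.open_source.inter isOpen_interior
  refine ⟨e'.source ∩ interior U, ⟨hpe', mem_interior_iff_mem_nhds.2 hU⟩,
    inter_subset_right.trans interior_subset, hopen,
    e'.isOpen_image_of_subset_source hopen hV, e'.injOn.mono hV, e'.symm,
    (e.contDiffOn_restrContDiff_target 𝕜 hn).mono ?_, fun q hq => e'.left_inv (hV hq), ?_⟩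
  · rintro _ ⟨q, hq, rfl⟩
    exact e'.map_source (hV hq)
  · rintro _ ⟨q, hq, rfl⟩
    exact e'.right_inv (e'.map_source (hV hq))

theorem HarmonicOnSet.harmonicOnNhd {f : ℂ → ℝ} {U : Set ℂ} (hU : IsOpen U)
    (hf : HarmonicOnSet f U) : HarmonicOnNhd f U := by
  intro x hx
  refine ⟨hf.1.contDiffAt (hU.mem_nhds hx), ?_⟩
  filter_upwards [hU.mem_nhds hx] with p hp
  have hdiff : DifferentiableAt ℝ (fderiv ℝ f) p :=
    ((hf.1.contDiffAt (hU.mem_nhds hp)).fderiv_right (m := 1) le_rfl).differentiableAt one_ne_zero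
  rw [laplacian_eq_iteratedFDeriv_complexPlane]
  simp only [iteratedFDeriv_two_apply, Pi.zero_apply]
  rw [← hf.2 p hp, fderiv_clm_apply hdiff (by fun_prop), fderiv_clm_apply hdiff (by fun_prop)]
  simp

theorem bijOn_image_of_leftInvOn {α β : Type*} {f : α → β} {g : β → α} {s : Set α}
    (h : LeftInvOn g f s) : BijOn g (f '' s) s :=
  h.injOn.bijOn_image.symm ⟨h.rightInvOn_image, h⟩

theorem det_fderiv_ofReal_add_ofReal_mul_I {ξ η : ℂ → ℝ} {p : ℂ} (hξ : DifferentiableAt ℝ ξ p)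
    (hη : DifferentiableAt ℝ η p) :
    (fderiv ℝ (fun z => (ξ z : ℂ) + η z * I) p).det =
      fderiv ℝ ξ p 1 * fderiv ℝ η p I - fderiv ℝ η p 1 * fderiv ℝ ξ p I := by
  have hderiv : HasFDerivAt (fun z => (ξ z : ℂ) + η z * I)
      (ofRealCLM ∘L fderiv ℝ ξ p + ofRealCLM.smulRight I ∘L fderiv ℝ η p) p :=
    (ofRealCLM.hasFDerivAt.comp p hξ.hasFDerivAt).add
      ((ofRealCLM.smulRight I).hasFDerivAt.comp p hη.hasFDerivAt)
  rw [hderiv.fderiv, ContinuousLinearMap.det, ← LinearMap.det_toMatrix basisOneI,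
    Matrix.det_fin_two]
  simp [LinearMap.toMatrix_apply, mul_comm]

theorem HarmonicOnSet.harmonicContOnCl_ofReal_add_ofReal_mul_I {ξ η : ℂ → ℝ} {U : Set ℂ}
    (hU : IsOpen U) (hξ : HarmonicOnSet ξ U) (hη : HarmonicOnSet η U)
    (hξc : ContinuousOn ξ (closure U)) (hηc : ContinuousOn η (closure U)) :
    HarmonicContOnCl (fun z => (ξ z : ℂ) + η z * I) U where
  harmonicOnNhd := ((hξ.harmonicOnNhd hU).comp_CLM ofRealCLM).add
    ((hη.harmonicOnNhd hU).comp_CLM (ofRealCLM.smulRight I))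
  continuousOn := by fun_prop

theorem stmt_7_general (Ω : Set ℂ) (hΩo : IsOpen Ω) (hΩb : Bornology.IsBounded Ω)
    (γ : ℂ → ℂ) (hΓ : frontier Ω = γ '' sphere (0 : ℂ) 1) (ξ η : ℂ → ℝ)
    (hξc : ContinuousOn ξ (closure Ω)) (hηc : ContinuousOn η (closure Ω))
    (hξh : HarmonicOnSet ξ Ω) (hηh : HarmonicOnSet η Ω)
    (hξb : ∀ θ : ℝ, ξ (γ (exp (θ * I))) = Real.cos θ)
    (hηb : ∀ θ : ℝ, η (γ (exp (θ * I))) = Real.sin θ)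
    (g : ℂ → ℂ) (hg : ∀ z, g z = (ξ z : ℂ) + (η z : ℂ) * I) :
    ∀ p ∈ Ω,
      (fderiv ℝ ξ p 1 * fderiv ℝ η p I - fderiv ℝ η p 1 * fderiv ℝ ξ p I ≠ 0) ∧
      ∃ U : Set ℂ, p ∈ U ∧ U ⊆ Ω ∧ IsOpen U ∧ IsOpen (g '' U) ∧ InjOn g U ∧
        ∃ ginv : ℂ → ℂ, ContDiffOn ℝ 1 ginv (g '' U) ∧
          (∀ q ∈ U, ginv (g q) = q) ∧ ∀ w ∈ g '' U, g (ginv w) = w := by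
  intro p hp
  have hbij : BijOn g (frontier Ω) (sphere 0 1) := by
    rw [hΓ]
    refine bijOn_image_of_leftInvOn fun w hw => ?_
    obtain ⟨θ, rfl⟩ := (norm_eq_one_iff w).1 (mem_sphere_zero_iff_norm.1 hw)
    rw [hg, hξb, hηb, exp_mul_I, ofReal_cos, ofReal_sin]
  obtain rfl : g = fun z => (ξ z : ℂ) + (η z : ℂ) * I := funext hg
  have hharm := hξh.harmonicContOnCl_ofReal_add_ofReal_mul_I hΩo hηh hξc hηc
  have hdet := det_fderiv_ne_zero_of_bijOn_circle hΩo hΩb hharm hbij hp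
  refine ⟨?_, exists_isOpen_injOn_contDiffOn_leftInvOn
    (f' := (fderiv ℝ _ p).toContinuousLinearEquivOfDetNeZero hdet)
    ((hharm.contDiffAt hp).of_le one_le_two) (hharm.differentiableAt hp).hasFDerivAt
    one_ne_zero (by simp) (hΩo.mem_nhds hp)⟩
  rwa [det_fderiv_ofReal_add_ofReal_mul_I
    ((hξh.1.contDiffAt (hΩo.mem_nhds hp)).differentiableAt two_ne_zero)
    ((hηh.1.contDiffAt (hΩo.mem_nhds hp)).differentiableAt two_ne_zero)] at hdet

end

theorem stmt_7 (Ω : Set ℂ) (hΩo : IsOpen Ω) (hΩb : Bornology.IsBounded Ω)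
    (hΩsc : SimplyConnectedSpace Ω)
    (γ : ℂ → ℂ) (hγinj : Set.InjOn γ (Metric.sphere (0 : ℂ) 1))
    (hγC2 : ContDiffOn ℝ 2 γ (Metric.sphere (0 : ℂ) 1))
    (hΓ : frontier Ω = γ '' Metric.sphere (0 : ℂ) 1)
    (ξ η : ℂ → ℝ)
    (hξc : ContinuousOn ξ (closure Ω)) (hηc : ContinuousOn η (closure Ω))
    (hξh : HarmonicOnSet ξ Ω) (hηh : HarmonicOnSet η Ω)
    (hξb : ∀ θ : ℝ, ξ (γ (Complex.exp (θ * Complex.I))) = Real.cos θ)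
    (hηb : ∀ θ : ℝ, η (γ (Complex.exp (θ * Complex.I))) = Real.sin θ)
    (g : ℂ → ℂ) (hg : ∀ z, g z = (ξ z : ℂ) + (η z : ℂ) * Complex.I) :
    ∀ p ∈ Ω,
      (fderiv ℝ ξ p 1 * fderiv ℝ η p Complex.I
          - fderiv ℝ η p 1 * fderiv ℝ ξ p Complex.I ≠ 0) ∧
      ∃ U : Set ℂ, p ∈ U ∧ U ⊆ Ω ∧ IsOpen U ∧ IsOpen (g '' U) ∧ Set.InjOn g U ∧
        ∃ ginv : ℂ → ℂ, ContDiffOn ℝ 1 ginv (g '' U) ∧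
          (∀ q ∈ U, ginv (g q) = q) ∧ (∀ w ∈ g '' U, g (ginv w) = w) :=
  stmt_7_general Ω hΩo hΩb γ hΓ ξ η hξc hηc hξh hηh hξb hηb g hg
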